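/- arXiv:2501.13112 — 2 statements merged into one kernel-verified Lean document; each statement's English description precedes it below -/
import Mathlib

section
/- For every matrix A ∈ Mat(2,ℂ) one has (1/2)·Σ_μ K̃^μ · A · K_μ = (1/2)·Σ_μ K^μ · A · K̃_μ = (tr A)·I, where the sums run over μ ∈ {0,1,2,3}. -/
open Matrix BigOperators

noncomputable section

/-- The Pauli basis of `Mat(2,ℂ)`: `σ^0 = I`, `σ^1, σ^2, σ^3` the Pauli matrices. -/
def σm : Fin 4 → Matrix (Fin 2) (Fin 2) ℂ :=
  ![1, !![0, 1; 1, 0], !![0, -Complex.I; Complex.I, 0], !![1, 0; 0, -1]]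

/-- The Minkowski matrix `η = diag(1,-1,-1,-1)`. -/
def ηm : Fin 4 → Fin 4 → ℝ := fun a b => if a = b then (if a = 0 then 1 else -1) else 0

/-- Lowered-index Pauli matrices `σ_a := Σ_b η_{ab} σ^b`. -/
def σd (a : Fin 4) : Matrix (Fin 2) (Fin 2) ℂ := ∑ b, ηm a b • σm b

/-- The conjugate matrix `M̃ := (tr M)·I − M`. -/
def mtilde (M : Matrix (Fin 2) (Fin 2) ℂ) : Matrix (Fin 2) (Fin 2) ℂ :=
  M.trace • (1 : Matrix (Fin 2) (Fin 2) ℂ) - M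

/-- The contravariant metric `g^{μν} := Σ_{a,b} y^μ_a y^ν_b η^{ab}` built from a tetrad `y`. -/
def gUp (y : Matrix (Fin 4) (Fin 4) ℝ) : Matrix (Fin 4) (Fin 4) ℝ :=
  Matrix.of fun μ ν => ∑ a, ∑ b, y μ a * y ν b * ηm a b

/-- The covariant metric `g_{μν}`, the inverse matrix of `(g^{μν})`. -/
def gDown (y : Matrix (Fin 4) (Fin 4) ℝ) : Matrix (Fin 4) (Fin 4) ℝ := (gUp y)⁻¹

/-- `K^μ := Σ_a y^μ_a σ^a ∈ Mat(2,ℂ)`. -/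
def K (y : Matrix (Fin 4) (Fin 4) ℝ) (μ : Fin 4) : Matrix (Fin 2) (Fin 2) ℂ :=
  ∑ a, y μ a • σm a

/-- `K_μ := Σ_ν g_{μν} K^ν`. -/
def Kd (y : Matrix (Fin 4) (Fin 4) ℝ) (μ : Fin 4) : Matrix (Fin 2) (Fin 2) ℂ :=
  ∑ ν, gDown y μ ν • K y ν

/-!
The tensor `∑ μ, K^μ ⊗ K_μ` does not depend on the tetrad: `g⁻¹` cancels both copies of `y`, leaving
`∑ a, σ^a ⊗ σ_a`. Conjugation exchanges `σ^a` and `σ_a`, which agree up to a sign, so both sandwich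
sums become `∑ a, σ^a * A * σ^a`, and this is `2 (tr A) I` by the completeness relation for the
Pauli matrices.
-/

section MatrixAction

variable {R l m n : Type*} [Fintype m] [Fintype n]

theorem sum_smul_sum_smul_eq_sum_mul_smul {V : Type*} [Semiring R] [AddCommMonoid V]
    [Module R V] (M : Matrix l m R) (N : Matrix m n R) (v : n → V) (i : l) :
    ∑ j, M i j • ∑ k, N j k • v k = ∑ k, (M * N) i k • v k := by
  simp only [Matrix.mul_apply, Finset.smul_sum, Finset.sum_smul, smul_smul]
  exact Finset.sum_comm

theorem sum_bilin_sum_smul_left {U V W : Type*} [CommSemiring R] [AddCommMonoid U]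
    [AddCommMonoid V] [AddCommMonoid W] [Module R U] [Module R V] [Module R W]
    (B : U →ₗ[R] V →ₗ[R] W) (M : Matrix m n R) (u : n → U) (v : m → V) :
    ∑ i, B (∑ j, M i j • u j) (v i) = ∑ j, B (u j) (∑ i, Mᵀ j i • v i) := by
  simp only [map_sum, map_smul, LinearMap.sum_apply, LinearMap.smul_apply, transpose_apply]
  exact Finset.sum_comm

theorem transpose_mul_inv_mul_mul_transpose_mul [CommRing R] [DecidableEq n]
    {P : Matrix n n R} (hP : IsUnit P.det) (S : Matrix n n R) : Pᵀ * (P * S * Pᵀ)⁻¹ * P = S⁻¹ := by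
  have hPt : IsUnit Pᵀ.det := by rwa [det_transpose]
  rw [Matrix.mul_inv_rev, Matrix.mul_inv_rev, mul_nonsing_inv_cancel_left _ _ hPt,
    nonsing_inv_mul_cancel_right _ _ hP]

end MatrixAction

theorem of_ηm_eq_diagonal : of ηm = diagonal fun a => if a = 0 then 1 else -1 := rfl

theorem inv_of_ηm : (of ηm)⁻¹ = of ηm := by
  refine inv_eq_left_inv ?_
  rw [of_ηm_eq_diagonal, diagonal_mul_diagonal, ← diagonal_one]
  congr 1
  ext a
  split_ifs <;> norm_num

theorem ηm_self_mul_self (a : Fin 4) : ηm a a * ηm a a = 1 := by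
  by_cases ha : a = 0 <;> simp [ηm, ha]

theorem gUp_eq_mul (y : Matrix (Fin 4) (Fin 4) ℝ) : gUp y = y * of ηm * yᵀ := by
  ext μ ν
  simp only [gUp, of_apply, mul_apply, transpose_apply, Finset.sum_mul, mul_right_comm]
  exact Finset.sum_comm

section Tetrad

variable {y : Matrix (Fin 4) (Fin 4) ℝ}

theorem transpose_mul_gDown_mul (hy : IsUnit y.det) :
    yᵀ * gDown y * y = of ηm := by
  rw [gDown, gUp_eq_mul, transpose_mul_inv_mul_mul_transpose_mul hy, inv_of_ηm]

theorem sum_transpose_smul_Kd (hy : IsUnit y.det) (a : Fin 4) :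
    ∑ μ, yᵀ a μ • Kd y μ = σd a := by
  simp only [Kd, K, sum_smul_sum_smul_eq_sum_mul_smul]
  rw [← Matrix.mul_assoc, transpose_mul_gDown_mul hy]
  rfl

theorem sum_bilin_K_Kd (hy : IsUnit y.det) {W : Type*} [AddCommMonoid W] [Module ℝ W]
    (B : Matrix (Fin 2) (Fin 2) ℂ →ₗ[ℝ] Matrix (Fin 2) (Fin 2) ℂ →ₗ[ℝ] W) :
    ∑ μ, B (K y μ) (Kd y μ) = ∑ a, B (σm a) (σd a) := by
  simp only [K, sum_bilin_sum_smul_left, sum_transpose_smul_Kd hy]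

end Tetrad

/-- The conjugation `M ↦ M̃` as a linear map, so that it can enter the bilinear maps to which
`sum_bilin_K_Kd` applies. -/
def mtildeLinear : Matrix (Fin 2) (Fin 2) ℂ →ₗ[ℂ] Matrix (Fin 2) (Fin 2) ℂ :=
  (traceLinearMap (Fin 2) ℂ ℂ).smulRight 1 - LinearMap.id

theorem mtildeLinear_apply (M : Matrix (Fin 2) (Fin 2) ℂ) : mtildeLinear M = mtilde M := rfl

theorem σd_eq_smul (a : Fin 4) : σd a = ηm a a • σm a :=
  Fintype.sum_eq_single a fun b hb => by simp [ηm, hb.symm]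

theorem mtilde_σm (a : Fin 4) : mtilde (σm a) = σd a := by
  rw [σd_eq_smul]
  fin_cases a <;> simp [mtilde, σm, ηm, trace_fin_two, two_smul]

theorem mtilde_σd (a : Fin 4) : mtilde (σd a) = σm a := by
  rw [σd_eq_smul, ← mtildeLinear_apply, LinearMap.map_smul_of_tower, mtildeLinear_apply, mtilde_σm,
    σd_eq_smul, smul_smul, ηm_self_mul_self, one_smul]

theorem sum_σm_mul_mul_σm (A : Matrix (Fin 2) (Fin 2) ℂ) :
    ∑ a, σm a * A * σm a = (2 * A.trace) • (1 : Matrix (Fin 2) (Fin 2) ℂ) := by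
  rw [eta_fin_two A]
  ext i j
  fin_cases i <;> fin_cases j <;> simp [Fin.sum_univ_four, σm, trace_fin_two] <;>
    grind [Complex.I_sq]

theorem sum_σd_mul_mul_σd (A : Matrix (Fin 2) (Fin 2) ℂ) :
    ∑ a, σd a * A * σd a = ∑ a, σm a * A * σm a := by
  simp only [σd_eq_smul, smul_mul_assoc, mul_smul_comm, smul_smul, ηm_self_mul_self, one_smul]

/-- `(1/2)·Σ_μ K̃^μ A K_μ = (1/2)·Σ_μ K^μ A K̃_μ = (tr A)·I` for every `A ∈ Mat(2,ℂ)`. -/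
theorem K_sandwich_trace (y : Matrix (Fin 4) (Fin 4) ℝ) (hy : IsUnit y.det)
    (A : Matrix (Fin 2) (Fin 2) ℂ) :
    (1 / 2 : ℂ) • ∑ μ, mtilde (K y μ) * A * Kd y μ
      = A.trace • (1 : Matrix (Fin 2) (Fin 2) ℂ) ∧
    (1 / 2 : ℂ) • ∑ μ, K y μ * A * mtilde (Kd y μ)
      = A.trace • (1 : Matrix (Fin 2) (Fin 2) ℂ) := by
  have half_smul_two_mul_trace : (1 / 2 : ℂ) • (2 * A.trace) • (1 : Matrix (Fin 2) (Fin 2) ℂ) =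
      A.trace • 1 := by
    rw [smul_smul]; congr 1; ring
  have sum_tilde_left : ∑ μ, mtilde (K y μ) * A * Kd y μ = ∑ a, mtilde (σm a) * A * σd a :=
    sum_bilin_K_Kd hy <| (LinearMap.mul ℝ _).compl₁₂
      (LinearMap.mulRight ℝ A ∘ₗ mtildeLinear.restrictScalars ℝ) LinearMap.id
  have sum_tilde_right : ∑ μ, K y μ * A * mtilde (Kd y μ) = ∑ a, σm a * A * mtilde (σd a) :=
    sum_bilin_K_Kd hy <| (LinearMap.mul ℝ _).compl₁₂
      (LinearMap.mulRight ℝ A) (mtildeLinear.restrictScalars ℝ)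
  constructor
  · simp only [sum_tilde_left, mtilde_σm, sum_σd_mul_mul_σd, sum_σm_mul_mul_σm,
      half_smul_two_mul_trace]
  · simp only [sum_tilde_right, mtilde_σd, sum_σm_mul_mul_σm, half_smul_two_mul_trace]
end
end

section
/- (Theorem 4, gauge symmetry II, flat-space form.) Suppose Ψ, K^μ, A_μ, C_μ : ℝ⁴ → Mat(2,ℂ) (μ ∈ {0,1,2,3}) are differentiable, each K^μ(x) is hermitian, each A_μ(x) is anti-hermitian, each C_μ(x) is anti-hermitian with tr C_μ(x) = 0, and the Dirac–Lanczos equation Σ_μ i·K^μ·(∂_μΨ − C_μ·Ψ + Ψ·A_μ) = 0 holds at every point. Let S : ℝ⁴ → Mat(2,ℂ) be differentiable with S(x)†·S(x) = I and det S(x) = 1 for all x. Define Ψ́ := S⁻¹·Ψ·S, Ḱ^μ := S⁻¹·K^μ·S, Ć_μ := S⁻¹·C_μ·S − S⁻¹·∂_μS, and Á_μ := S⁻¹·A_μ·S − S⁻¹·∂_μS. Then Σ_μ i·Ḱ^μ·(∂_μΨ́ − Ć_μ·Ψ́ + Ψ́·Á_μ) = 0 at every point. -/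
open Matrix BigOperators

noncomputable section

attribute [local instance] Matrix.normedAddCommGroup Matrix.normedSpace

/-- The partial derivative `∂_μ f` at `x` of a map `f : ℝ⁴ → E`. -/
def pd {E : Type*} [NormedAddCommGroup E] [NormedSpace ℝ E]
    (f : (Fin 4 → ℝ) → E) (μ : Fin 4) (x : Fin 4 → ℝ) : E :=
  fderiv ℝ f x (Pi.single μ 1)

/-- `π₊(M) := ((1/2)·tr M)·I`. -/
def πplus (M : Matrix (Fin 2) (Fin 2) ℂ) : Matrix (Fin 2) (Fin 2) ℂ :=
  ((1 / 2 : ℂ) * M.trace) • (1 : Matrix (Fin 2) (Fin 2) ℂ)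

/-- `π₋(M) := M − π₊(M)`, the traceless part of `M`. -/
def πminus (M : Matrix (Fin 2) (Fin 2) ℂ) : Matrix (Fin 2) (Fin 2) ℂ :=
  M - πplus M

/-!
Conjugation by `S` adds the commutator `⁅Ψ́, S⁻¹∂S⁆` to the derivative of `Ψ́ = S⁻¹ΨS`, and the
common shift `-S⁻¹∂S` of the two connections subtracts the same commutator. The covariant
derivative `∂Ψ - CΨ + ΨA` is therefore merely conjugated by `S`, and so is the whole equation.
-/

section NormedAlgebra

open scoped Ring

variable {𝕜 E R ι : Type*} [NontriviallyNormedField 𝕜] [NormedAddCommGroup E] [NormedSpace 𝕜 E]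
  [NormedRing R] [NormedAlgebra 𝕜 R]

variable (𝕜) in
/-- The covariant derivative at `x` in the direction `v` of a field `Ψ` on which one connection
acts from the left and another from the right; `C` and `A` are the components of these connections
at `x` along `v`. -/
def covDeriv (Ψ : E → R) (C A : R) (x v : E) : R :=
  fderiv 𝕜 Ψ x v - C * Ψ x + Ψ x * A

variable (𝕜) in
/-- The left logarithmic derivative `S⁻¹∂S` at `x` in the direction `v`, that is, the
Maurer–Cartan form pulled back along `S`. It is `0` where `S x` is not invertible. -/
def leftLogDeriv (S : E → R) (x v : E) : R :=
  (S x)⁻¹ʳ * fderiv 𝕜 S x v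

variable (𝕜) in
/-- The gauge transform under `S` of the component `B` at `x` along `v` of a connection. -/
def gaugeTransform (S : E → R) (B : R) (x v : E) : R :=
  (S x)⁻¹ʳ * B * S x - leftLogDeriv 𝕜 S x v

variable [HasSummableGeomSeries R] {Ψ S : E → R} {x : E}

theorem fderiv_ringInverse_comp (hS : DifferentiableAt 𝕜 S x) (hSx : IsUnit (S x)) (v : E) :
    fderiv 𝕜 (fun z => (S z)⁻¹ʳ) x v = -(leftLogDeriv 𝕜 S x v * (S x)⁻¹ʳ) := by
  rw [fderiv_fun_comp x (differentiableAt_inverse hSx) hS]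
  obtain ⟨u, hu⟩ := hSx
  simp [leftLogDeriv, ← hu, fderiv_inverse]

theorem fderiv_ringInverse_conj (hΨ : DifferentiableAt 𝕜 Ψ x) (hS : DifferentiableAt 𝕜 S x)
    (hSx : IsUnit (S x)) (v : E) :
    fderiv 𝕜 (fun z => (S z)⁻¹ʳ * Ψ z * S z) x v =
      (S x)⁻¹ʳ * fderiv 𝕜 Ψ x v * S x + ⁅(S x)⁻¹ʳ * Ψ x * S x, leftLogDeriv 𝕜 S x v⁆ := by
  have hSinv : DifferentiableAt 𝕜 (fun z => (S z)⁻¹ʳ) x := hS.inverse hSx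
  have fderiv_eq : fderiv 𝕜 S x v = S x * leftLogDeriv 𝕜 S x v :=
    (Ring.mul_inverse_cancel_left _ _ hSx).symm
  rw [fderiv_fun_mul' (hSinv.fun_mul hΨ) hS, fderiv_fun_mul' hSinv hΨ]
  simp only [_root_.add_apply, _root_.smul_apply, smul_eq_mul, MulOpposite.smul_eq_mul_unop,
    MulOpposite.unop_op, fderiv_ringInverse_comp hS hSx, fderiv_eq, Ring.lie_def]
  noncomm_ring

theorem covDeriv_gaugeTransform (hΨ : DifferentiableAt 𝕜 Ψ x) (hS : DifferentiableAt 𝕜 S x)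
    (hSx : IsUnit (S x)) (C A : R) (v : E) :
    covDeriv 𝕜 (fun z => (S z)⁻¹ʳ * Ψ z * S z)
        (gaugeTransform 𝕜 S C x v) (gaugeTransform 𝕜 S A x v) x v =
      (S x)⁻¹ʳ * covDeriv 𝕜 Ψ C A x v * S x := by
  simp only [covDeriv, gaugeTransform, fderiv_ringInverse_conj hΨ hS hSx, Ring.lie_def]
  simp only [mul_add, add_mul, mul_sub, sub_mul, mul_assoc, Ring.mul_inverse_cancel_left _ _ hSx]
  abel

theorem sum_mul_covDeriv_gaugeTransform [Fintype ι] (hΨ : DifferentiableAt 𝕜 Ψ x)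
    (hS : DifferentiableAt 𝕜 S x) (hSx : IsUnit (S x)) (K C A : ι → R) (v : ι → E) :
    ∑ μ, (S x)⁻¹ʳ * K μ * S x *
        covDeriv 𝕜 (fun z => (S z)⁻¹ʳ * Ψ z * S z)
          (gaugeTransform 𝕜 S (C μ) x (v μ)) (gaugeTransform 𝕜 S (A μ) x (v μ)) x (v μ) =
      (S x)⁻¹ʳ * (∑ μ, K μ * covDeriv 𝕜 Ψ (C μ) (A μ) x (v μ)) * S x := by
  rw [Finset.mul_sum, Finset.sum_mul]
  refine Finset.sum_congr rfl fun μ _ => ?_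
  rw [covDeriv_gaugeTransform hΨ hS hSx]
  simp only [mul_assoc, Ring.mul_inverse_cancel_left _ _ hSx]

end NormedAlgebra

section Matrix

variable {𝕜 E 𝔸 ι n : Type*} [NontriviallyNormedField 𝕜] [NormedAddCommGroup E] [NormedSpace 𝕜 E]
  [NormedCommRing 𝔸] [NormedAlgebra 𝕜 𝔸] [CompleteSpace 𝔸] [Fintype ι] [Fintype n] [DecidableEq n]

theorem dirac_lanczos_gauge_symmetry_II_general {Ψ S : E → Matrix n n 𝔸} {x : E}
    (hΨ : DifferentiableAt 𝕜 Ψ x) (hS : DifferentiableAt 𝕜 S x) (hSx : IsUnit (S x))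
    (K A C : ι → Matrix n n 𝔸) (v : ι → E) (c : 𝔸)
    (heq : ∑ μ, c • (K μ * (fderiv 𝕜 Ψ x (v μ) - C μ * Ψ x + Ψ x * A μ)) = 0) :
    ∑ μ, c • ((S x)⁻¹ * K μ * S x *
      (fderiv 𝕜 (fun z => (S z)⁻¹ * Ψ z * S z) x (v μ)
        - ((S x)⁻¹ * C μ * S x - (S x)⁻¹ * fderiv 𝕜 S x (v μ)) * ((S x)⁻¹ * Ψ x * S x)
        + ((S x)⁻¹ * Ψ x * S x) *
          ((S x)⁻¹ * A μ * S x - (S x)⁻¹ * fderiv 𝕜 S x (v μ)))) = 0 := by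
  -- The sup norm is not submultiplicative; the `L∞` operator norm is, and it induces
  -- definitionally the same topology, hence the same derivatives.
  let : NormedRing (Matrix n n 𝔸) := Matrix.linftyOpNormedRing
  let : NormedAlgebra 𝕜 (Matrix n n 𝔸) := Matrix.linftyOpNormedAlgebra
  have : @CompleteSpace (Matrix n n 𝔸) PseudoMetricSpace.toUniformSpace :=
    inferInstanceAs (CompleteSpace (Matrix n n 𝔸))
  have heq_covDeriv : ∑ μ, c • K μ * covDeriv 𝕜 Ψ (C μ) (A μ) x (v μ) = 0 := by
    simpa only [smul_mul_assoc] using! heq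
  have transformed := sum_mul_covDeriv_gaugeTransform hΨ hS hSx (fun μ => c • K μ) C A v
  rw [heq_covDeriv, mul_zero, zero_mul] at transformed
  simpa only [Matrix.nonsing_inv_eq_ringInverse, mul_smul_comm, smul_mul_assoc]
    using! transformed

end Matrix

/-- Theorem 4, gauge symmetry II (flat-space form): the Dirac–Lanczos equation is
invariant under `Ψ → S⁻¹ΨS`, `K^μ → S⁻¹K^μS`, `C_μ → S⁻¹C_μS − S⁻¹∂_μS`,
`A_μ → S⁻¹A_μS − S⁻¹∂_μS` with `S : ℝ⁴ → SU(2)`. -/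
theorem dirac_lanczos_gauge_symmetry_II
    (Ψ : (Fin 4 → ℝ) → Matrix (Fin 2) (Fin 2) ℂ)
    (K A C : Fin 4 → (Fin 4 → ℝ) → Matrix (Fin 2) (Fin 2) ℂ)
    (hΨ : Differentiable ℝ Ψ)
    (hK : ∀ μ, Differentiable ℝ (K μ))
    (hA : ∀ μ, Differentiable ℝ (A μ))
    (hC : ∀ μ, Differentiable ℝ (C μ))
    (hKh : ∀ μ x, (K μ x)ᴴ = K μ x)
    (hAah : ∀ μ x, (A μ x)ᴴ = -A μ x)
    (hCah : ∀ μ x, (C μ x)ᴴ = -C μ x)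
    (hCtr : ∀ μ x, (C μ x).trace = 0)
    (heq : ∀ x, (∑ μ, Complex.I • (K μ x * (pd Ψ μ x - C μ x * Ψ x + Ψ x * A μ x))) = 0)
    (S : (Fin 4 → ℝ) → Matrix (Fin 2) (Fin 2) ℂ)
    (hS : Differentiable ℝ S)
    (hSu : ∀ x, (S x)ᴴ * S x = 1)
    (hSdet : ∀ x, (S x).det = 1) :
    ∀ x, (∑ μ, Complex.I • ((S x)⁻¹ * K μ x * S x *
        (pd (fun z => (S z)⁻¹ * Ψ z * S z) μ x
          - ((S x)⁻¹ * C μ x * S x - (S x)⁻¹ * pd S μ x) * ((S x)⁻¹ * Ψ x * S x)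
          + ((S x)⁻¹ * Ψ x * S x) * ((S x)⁻¹ * A μ x * S x - (S x)⁻¹ * pd S μ x)))) = 0 := by
  intro x
  have hSx : IsUnit (S x) := (Matrix.isUnit_iff_isUnit_det _).2 (hSdet x ▸ isUnit_one)
  exact dirac_lanczos_gauge_symmetry_II_general (hΨ x) (hS x) hSx
    (K · x) (A · x) (C · x) (Pi.single · 1) Complex.I (heq x)
end
end
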